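/- For all integers k ≥ ℓ ≥ 0 and all α, β ∈ ℤ, the polynomial identity (k−ℓ)! · ℓ! · P_{k,ℓ}^{(α,β)}(z) = (−1)^{ℓ(ℓ+1)/2} Σ_{(m,n)} q_{(m,n)}(z) · ∏_{i=0}^{k−ℓ−1} c_{α−β+m(i)} · ∏_{j=0}^{ℓ−1} d_{α+n(j)} holds in ℂ[z], where q_{(m,n)}(z) ∈ ℂ[z] is the coefficient of the monomial ∏_i x_i^{m(i)} ∏_j y_j^{n(j)} in the polynomial ∏_{0≤i<i'≤k−ℓ−1}(x_i − x_{i'})² · ∏_{0≤j<j'≤ℓ−1}(y_j − y_{j'})² · ∏_{i,j}(x_i − y_j) · ∏_{i=0}^{k−ℓ−1}(z − x_i) · ∏_{j=0}^{ℓ−1}(z − y_j) (regarded as a polynomial in the x's and y's with coefficients in ℂ[z]), and the sum ranges over all pairs of exponent vectors (m,n) with q_{(m,n)} ≠ 0. -/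

import Mathlib

/-- The `ĜL₃` determinantal polynomial `P_{k,ℓ}^{(α,β)}(z)`: `(−1)^{ℓ(ℓ+1)/2}` times the
determinant of the `(k+1) × (k+1)` matrix whose `(i,j)` entry is `d_{α+i+j}` for
`0 ≤ j ≤ ℓ-1`, `c_{α−β+i+j−ℓ}` for `ℓ ≤ j ≤ k-1`, and `z^i` for `j = k`. -/
noncomputable def P3 (c d : ℤ → ℂ) (k ℓ : ℕ) (α β : ℤ) : Polynomial ℂ :=
  (-1 : Polynomial ℂ) ^ (ℓ * (ℓ + 1) / 2) *
    Matrix.det (Matrix.of fun i j : Fin (k + 1) =>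
      if (j : ℕ) < ℓ then Polynomial.C (d (α + (i : ℕ) + (j : ℕ)))
      else if (j : ℕ) < k then Polynomial.C (c (α - β + (i : ℕ) + (j : ℕ) - (ℓ : ℤ)))
      else Polynomial.X ^ (i : ℕ))

/-- The polynomial
`∏_{i<i'}(x_i − x_{i'})² ⬝ ∏_{j<j'}(y_j − y_{j'})² ⬝ ∏_{i,j}(x_i − y_j) ⬝ ∏_i (z − x_i) ⬝
∏_j (z − y_j)` in the variables `x_0, …, x_{k-ℓ-1}` (indexed by `Sum.inl`) and
`y_0, …, y_{ℓ-1}` (indexed by `Sum.inr`), with coefficients in `ℂ[z]`. -/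
noncomputable def pKernelShift (k ℓ : ℕ) : MvPolynomial (Fin (k - ℓ) ⊕ Fin ℓ) (Polynomial ℂ) :=
  (∏ p ∈ (Finset.univ : Finset (Fin (k - ℓ) × Fin (k - ℓ))).filter (fun p => p.1 < p.2),
      (MvPolynomial.X (Sum.inl p.1) - MvPolynomial.X (Sum.inl p.2)) ^ 2) *
    (∏ p ∈ (Finset.univ : Finset (Fin ℓ × Fin ℓ)).filter (fun p => p.1 < p.2),
      (MvPolynomial.X (Sum.inr p.1) - MvPolynomial.X (Sum.inr p.2)) ^ 2) *
    (∏ i : Fin (k - ℓ), ∏ j : Fin ℓ,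
      (MvPolynomial.X (Sum.inl i) - MvPolynomial.X (Sum.inr j))) *
    (∏ i : Fin (k - ℓ), (MvPolynomial.C Polynomial.X - MvPolynomial.X (Sum.inl i))) *
    ∏ j : Fin ℓ, (MvPolynomial.C Polynomial.X - MvPolynomial.X (Sum.inr j))

/-!
Let `Λ` be the linear functional sending `∏ x_i^{m i} ∏ y_j^{n j}` to `∏ c_{m i} ∏ d_{n j}`, and let
`W` be the Vandermonde determinant in the nodes `y_0, …, y_{ℓ-1}, x_0, …, x_{k-ℓ-1}, z`. Each column
of `W` involves a single node, so applying `Λ` to `∏ x_i^i ∏ y_j^j · W` column by column produces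
the determinant of `P_{k,ℓ}`. On the other hand `Λ` is invariant under permutations of the `x`'s and
of the `y`'s, while `W` is alternating in each group; averaging over both symmetric groups therefore
replaces `∏ x_i^i` and `∏ y_j^j` by Vandermonde determinants, at the cost of the factors `(k-ℓ)!`
and `ℓ!`. What remains, `V(x) V(y) W`, factors as the kernel of the formula.
-/

section Determinants

open Matrix

variable {R : Type*} [CommRing R]

theorem det_vandermonde_eq_prod_ite {n : ℕ} (v : Fin n → R) :
    (vandermonde v).det = ∏ i, ∏ j, if i < j then v j - v i else 1 := by
  simp only [det_vandermonde, ← Finset.filter_lt_eq_Ioi, Finset.prod_filter]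

theorem det_vandermonde_sq {n : ℕ} (v : Fin n → R) :
    (vandermonde v).det ^ 2 = ∏ p : Fin n × Fin n with p.1 < p.2, (v p.1 - v p.2) ^ 2 := by
  simp only [det_vandermonde_eq_prod_ite, Finset.prod_filter, Fintype.prod_prod_type,
    ← Finset.prod_pow, ite_pow, one_pow, sub_sq_comm]

theorem det_vandermonde_snoc {n : ℕ} (v : Fin n → R) (z : R) :
    (vandermonde (Fin.snoc v z : Fin (n + 1) → R)).det = (vandermonde v).det * ∏ i, (z - v i) := by
  simp only [det_vandermonde_eq_prod_ite, Fin.prod_univ_castSucc, Fin.snoc_castSucc, Fin.snoc_last,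
    Fin.castSucc_lt_castSucc_iff, Fin.castSucc_lt_last, if_true, (Fin.le_last _).not_gt, if_false,
    Finset.prod_mul_distrib, Finset.prod_const_one, mul_one]

theorem det_vandermonde_append {m n : ℕ} (v : Fin m → R) (w : Fin n → R) :
    (vandermonde (Fin.append v w)).det =
      (vandermonde v).det * (vandermonde w).det * ∏ j, ∏ i, (w j - v i) := by
  induction n with
  | zero => simp [Fin.append_right_nil, det_isEmpty]
  | succ n ih =>
    induction w using Fin.snocCases with
    | snoc w z =>
      rw [Fin.append_snoc, det_vandermonde_snoc (n := m + n), det_vandermonde_snoc, ih,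
        Fin.prod_univ_add]
      simp only [Fin.append_left, Fin.append_right, Fin.prod_univ_castSucc, Fin.snoc_castSucc,
        Fin.snoc_last]
      ring

theorem map_det_mul_eq_card_factorial_smul {S κ B M : Type*} [CommSemiring S] [Fintype κ]
    [DecidableEq κ] [CommRing B] [Algebra S B] [AddCommMonoid M] [Module S M] (Λ : B →ₗ[S] M)
    (φ : Equiv.Perm κ → B →ₐ[S] B) (hΛ : ∀ σ b, Λ (φ σ b) = Λ b)
    {V : Matrix κ κ B} (hV : ∀ σ i j, φ σ (V i j) = V (σ i) j) {D : B}
    (hD : ∀ σ, φ σ D = Equiv.Perm.sign σ • D) :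
    Λ (V.det * D) = (Fintype.card κ).factorial • Λ ((∏ i, V i i) * D) := by
  have expand : V.det * D = ∑ σ, φ σ ((∏ i, V i i) * D) := by
    simp only [det_apply, Finset.sum_mul, map_mul, map_prod, hV, hD, smul_mul_assoc, mul_smul_comm]
  simp only [expand, map_sum, hΛ, Finset.sum_const, Finset.card_univ, Fintype.card_perm]

end Determinants

section MomentFunctional

open MvPolynomial

variable {ι κ A : Type*} [Fintype ι] [Fintype κ] [CommSemiring A]

/-- The `A`-linear functional on polynomials which sends the monomial `∏ X i ^ m i` to the product
of moments `∏ μ i (m i)`; it plays the role of an iterated integral (or residue) against a product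
of measures, the `i`-th of which has moments `μ i`. -/
noncomputable def momentFunctional (μ : ι → ℕ → A) : MvPolynomial ι A →ₗ[A] A :=
  (basisMonomials ι A).constr A fun m => ∏ i, μ i (m i)

theorem momentFunctional_monomial (μ : ι → ℕ → A) (m : ι →₀ ℕ) (a : A) :
    momentFunctional μ (monomial m a) = a * ∏ i, μ i (m i) := by
  have h := (basisMonomials ι A).constr_basis A (fun m => ∏ i, μ i (m i)) m
  rw [coe_basisMonomials] at h
  rw [← mul_one a, ← smul_eq_mul, ← smul_monomial, map_smul, momentFunctional, h, smul_eq_mul,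
    smul_eq_mul, mul_one]

theorem momentFunctional_eq_sum_support (μ : ι → ℕ → A) (p : MvPolynomial ι A) :
    momentFunctional μ p = ∑ m ∈ p.support, p.coeff m * ∏ i, μ i (m i) := by
  conv_lhs => rw [p.as_sum, map_sum]
  simp only [momentFunctional_monomial]

theorem momentFunctional_prod_X_pow_mul_C (μ : ι → ℕ → A) (s : ι → ℕ) (a : A) :
    momentFunctional μ ((∏ i, X i ^ s i) * C a) = (∏ i, μ i (s i)) * a := by
  have h : (∏ i, X i ^ s i) * C a = monomial (Finsupp.equivFunOnFinite.symm s) a := by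
    rw [monomial_eq, Finsupp.prod_fintype _ _ fun _ => pow_zero _, mul_comm]
    simp only [Finsupp.equivFunOnFinite_symm_apply_apply]
  rw [h, momentFunctional_monomial, mul_comm]
  simp only [Finsupp.equivFunOnFinite_symm_apply_apply]

theorem momentFunctional_rename (μ : κ → ℕ → A) (e : ι ≃ κ) (p : MvPolynomial ι A) :
    momentFunctional μ (rename e p) = momentFunctional (μ ∘ e) p := by
  induction p using MvPolynomial.induction_on' with
  | monomial m a =>
    simp only [rename_monomial, momentFunctional_monomial, ← e.prod_comp,
      Finsupp.mapDomain_apply e.injective, Function.comp_apply]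
  | add p q hp hq => simp only [map_add, hp, hq]

theorem momentFunctional_sumElim_rename (c d : ℕ → A) (σ : Equiv.Perm ι) (τ : Equiv.Perm κ)
    (p : MvPolynomial (ι ⊕ κ) A) :
    momentFunctional (Sum.elim (fun _ => c) fun _ => d) (rename (Equiv.sumCongr σ τ) p) =
      momentFunctional (Sum.elim (fun _ => c) fun _ => d) p := by
  have hμ : (Sum.elim (fun _ => c) fun _ => d) ∘ Equiv.sumCongr σ τ =
      Sum.elim (fun _ => c) fun _ => d := funext fun v => by cases v <;> rfl
  rw [momentFunctional_rename, hμ]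

end MomentFunctional

section PointedVandermonde

open MvPolynomial

variable {ι A : Type*} [CommRing A]

/-- The Vandermonde determinant in the nodes `X (e 0), …, X (e (m - 1)), z`, where `e` fixes the
order of the variables. -/
noncomputable def pointedVandermonde {m : ℕ} (e : Fin m ≃ ι) (z : A) : MvPolynomial ι A :=
  (Matrix.vandermonde (Fin.snoc (fun j => X (e j)) (C z) : Fin (m + 1) → MvPolynomial ι A)).det

theorem rename_pointedVandermonde [Fintype ι] [DecidableEq ι] {m : ℕ} (e : Fin m ≃ ι) (z : A)
    (σ : Equiv.Perm ι) :
    rename σ (pointedVandermonde e z) = Equiv.Perm.sign σ • pointedVandermonde e z := by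
  have hdet : rename σ (Matrix.vandermonde fun j => (X (e j) : MvPolynomial ι A)).det =
      Equiv.Perm.sign σ • (Matrix.vandermonde fun j => (X (e j) : MvPolynomial ι A)).det := by
    rw [AlgHom.map_det, ← Equiv.Perm.sign_permCongr e.symm σ, Units.smul_def, zsmul_eq_mul,
      ← Matrix.det_permute]
    congr 1
    ext1 i j
    simp [Matrix.vandermonde_apply]
  have hprod : rename σ (∏ j, (C z - X (e j)) : MvPolynomial ι A) = ∏ j, (C z - X (e j)) := by
    simp only [e.prod_comp fun i => (C z - X i : MvPolynomial ι A), map_prod, map_sub, rename_C,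
      rename_X, Equiv.prod_comp σ fun i => (C z - X i : MvPolynomial ι A)]
  rw [pointedVandermonde, det_vandermonde_snoc, map_mul, hdet, hprod, smul_mul_assoc]

theorem momentFunctional_prod_X_pow_mul_pointedVandermonde [Fintype ι] {m : ℕ} (μ : ι → ℕ → A)
    (s : ι → ℕ) (e : Fin m ≃ ι) (z : A) :
    momentFunctional μ ((∏ i, X i ^ s i) * pointedVandermonde e z) =
      (Matrix.of fun i j : Fin (m + 1) =>
        (Fin.snoc (fun j => μ (e j) (i + s (e j))) (z ^ (i : ℕ)) : Fin (m + 1) → A) j).det := by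
  rw [pointedVandermonde, ← Matrix.det_transpose, Matrix.det_apply, Matrix.det_apply,
    Finset.mul_sum, map_sum]
  refine Finset.sum_congr rfl fun σ _ => ?_
  rw [mul_smul_comm, Units.smul_def, Units.smul_def, map_zsmul]
  congr 1
  let t : ι → ℕ := fun i => σ (e.symm i).castSucc + s i
  have column_product : (∏ i, X i ^ s i) *
      ∏ j, (Matrix.vandermonde (Fin.snoc (fun j => X (e j)) (C z))).transpose (σ j) j =
      (∏ i, X i ^ t i) * C (z ^ (σ (Fin.last m) : ℕ)) := by
    simp only [t, Matrix.transpose_apply, Matrix.vandermonde_apply, Fin.prod_univ_castSucc,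
      Fin.snoc_castSucc, Fin.snoc_last, pow_add, Finset.prod_mul_distrib, C_pow]
    rw [← e.prod_comp fun i => (X i : MvPolynomial ι A) ^ (σ (e.symm i).castSucc : ℕ)]
    simp only [Equiv.symm_apply_apply]
    ring
  rw [column_product, momentFunctional_prod_X_pow_mul_C, Fin.prod_univ_castSucc, ← e.prod_comp]
  simp [t]

end PointedVandermonde

section ResidueFormula

open MvPolynomial

variable {A : Type*} [CommRing A]

/-- The polynomial `pKernelShift` over an arbitrary coefficient ring, with `n` variables `x`,
`ℓ` variables `y` and an arbitrary element `z` of the ring. -/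
noncomputable def residueKernel (z : A) (n ℓ : ℕ) : MvPolynomial (Fin n ⊕ Fin ℓ) A :=
  (∏ p : Fin n × Fin n with p.1 < p.2, (X (Sum.inl p.1) - X (Sum.inl p.2)) ^ 2) *
    (∏ p : Fin ℓ × Fin ℓ with p.1 < p.2, (X (Sum.inr p.1) - X (Sum.inr p.2)) ^ 2) *
    (∏ i : Fin n, ∏ j : Fin ℓ, (X (Sum.inl i) - X (Sum.inr j))) *
    (∏ i : Fin n, (C z - X (Sum.inl i))) *
    ∏ j : Fin ℓ, (C z - X (Sum.inr j))

/-- The order `y_0, …, y_{ℓ-1}, x_0, …, x_{n-1}` in which the columns of `P3` list the variables. -/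
def columnEquiv (n ℓ : ℕ) : Fin (ℓ + n) ≃ Fin n ⊕ Fin ℓ :=
  finSumFinEquiv.symm.trans (Equiv.sumComm _ _)

theorem columnEquiv_castAdd (n ℓ : ℕ) (j : Fin ℓ) :
    columnEquiv n ℓ (Fin.castAdd n j) = Sum.inr j := by
  simp [columnEquiv]

theorem columnEquiv_natAdd (n ℓ : ℕ) (i : Fin n) :
    columnEquiv n ℓ (Fin.natAdd ℓ i) = Sum.inl i := by
  simp [columnEquiv]

theorem residueKernel_eq_vandermonde_mul (z : A) (n ℓ : ℕ) :
    residueKernel z n ℓ =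
      (Matrix.vandermonde fun i : Fin n => X (Sum.inl i)).det *
        ((Matrix.vandermonde fun j : Fin ℓ => X (Sum.inr j)).det *
          pointedVandermonde (columnEquiv n ℓ) z) := by
  have nodes : (fun j => X (columnEquiv n ℓ j) : Fin (ℓ + n) → MvPolynomial (Fin n ⊕ Fin ℓ) A) =
      Fin.append (fun j => X (Sum.inr j)) (fun i => X (Sum.inl i)) := by
    ext1 j
    refine Fin.addCases (fun j => ?_) (fun i => ?_) j
    · rw [columnEquiv_castAdd, Fin.append_left]
    · rw [columnEquiv_natAdd, Fin.append_right]
  rw [pointedVandermonde, nodes, det_vandermonde_snoc, det_vandermonde_append, Fin.prod_univ_add]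
  simp only [Fin.append_left, Fin.append_right, residueKernel]
  rw [← det_vandermonde_sq fun i : Fin n => (X (Sum.inl i) : MvPolynomial (Fin n ⊕ Fin ℓ) A),
    ← det_vandermonde_sq fun j : Fin ℓ => (X (Sum.inr j) : MvPolynomial (Fin n ⊕ Fin ℓ) A)]
  ring

theorem momentFunctional_residueKernel (c d : ℕ → A) (z : A) (n ℓ : ℕ) :
    momentFunctional (Sum.elim (fun _ => c) fun _ => d) (residueKernel z n ℓ) =
      ((n.factorial * ℓ.factorial : ℕ) : A) *
        momentFunctional (Sum.elim (fun _ => c) fun _ => d)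
          ((∏ v : Fin n ⊕ Fin ℓ, X v ^ v.elim Fin.val Fin.val) *
            pointedVandermonde (columnEquiv n ℓ) z) := by
  let Λ := momentFunctional (Sum.elim (fun _ : Fin n => c) fun _ : Fin ℓ => d)
  let φ (σ : Equiv.Perm (Fin n)) (τ : Equiv.Perm (Fin ℓ)) := rename (R := A) (Equiv.sumCongr σ τ)
  let Vx := Matrix.vandermonde fun i : Fin n => (X (Sum.inl i) : MvPolynomial (Fin n ⊕ Fin ℓ) A)
  let Vy := Matrix.vandermonde fun j : Fin ℓ => (X (Sum.inr j) : MvPolynomial (Fin n ⊕ Fin ℓ) A)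
  let W := pointedVandermonde (columnEquiv n ℓ) z
  have hΛ (σ τ p) : Λ (φ σ τ p) = Λ p := momentFunctional_sumElim_rename c d σ τ p
  have hVx (σ τ i j) : φ σ τ (Vx i j) = Vx (σ i) j := by simp [φ, Vx, Matrix.vandermonde_apply]
  have hVy (σ τ i j) : φ σ τ (Vy i j) = Vy (τ i) j := by simp [φ, Vy, Matrix.vandermonde_apply]
  have hW (σ τ) : φ σ τ W = (Equiv.Perm.sign σ * Equiv.Perm.sign τ) • W := by
    rw [← Equiv.Perm.sign_sumCongr, ← rename_pointedVandermonde]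
  have hVyW (σ) : φ σ 1 (Vy.det * W) = Equiv.Perm.sign σ • (Vy.det * W) := by
    have hdet : φ σ 1 Vy.det = Vy.det := by
      rw [AlgHom.map_det]
      exact congrArg Matrix.det (Matrix.ext fun i j => hVy σ 1 i j)
    rw [map_mul, hdet, hW, map_one, mul_one, mul_smul_comm]
  have hVxW (τ) : φ 1 τ ((∏ i, Vx i i) * W) = Equiv.Perm.sign τ • ((∏ i, Vx i i) * W) := by
    simp only [map_mul, map_prod, hVx, hW, Equiv.Perm.one_apply, map_one, one_mul, mul_smul_comm]
  calc Λ (residueKernel z n ℓ)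
      = Λ (Vx.det * (Vy.det * W)) := by rw [residueKernel_eq_vandermonde_mul]
    _ = n.factorial • Λ (Vy.det * ((∏ i, Vx i i) * W)) := by
      rw [map_det_mul_eq_card_factorial_smul Λ (φ · 1) (hΛ · 1) (hVx · 1) hVyW, Fintype.card_fin,
        mul_left_comm]
    _ = n.factorial • ℓ.factorial • Λ ((∏ j, Vy j j) * ((∏ i, Vx i i) * W)) := by
      rw [map_det_mul_eq_card_factorial_smul Λ (φ 1) (hΛ 1) (hVy 1) hVxW, Fintype.card_fin]
    _ = ((n.factorial * ℓ.factorial : ℕ) : A) *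
          Λ ((∏ v : Fin n ⊕ Fin ℓ, X v ^ v.elim Fin.val Fin.val) * W) := by
      rw [smul_smul, nsmul_eq_mul, Fintype.prod_sum_type, mul_left_comm, mul_assoc]
      rfl

end ResidueFormula

theorem residue_formula_P3_general {A : Type*} [CommRing A] (c d : ℤ → A) (z : A) {k ℓ : ℕ}
    (hℓk : ℓ ≤ k) (α β : ℤ) :
    (((k - ℓ).factorial * ℓ.factorial : ℕ) : A) *
        Matrix.det (Matrix.of fun i j : Fin (k + 1) =>
          if (j : ℕ) < ℓ then d (α + (i : ℕ) + (j : ℕ))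
          else if (j : ℕ) < k then c (α - β + (i : ℕ) + (j : ℕ) - (ℓ : ℤ))
          else z ^ (i : ℕ)) =
      ∑ m ∈ (residueKernel z (k - ℓ) ℓ).support,
        (residueKernel z (k - ℓ) ℓ).coeff m *
          ((∏ i : Fin (k - ℓ), c (α - β + (m (Sum.inl i) : ℤ))) *
            ∏ j : Fin ℓ, d (α + (m (Sum.inr j) : ℤ))) := by
  generalize hn : k - ℓ = n
  obtain rfl : k = ℓ + n := by lia
  have h := momentFunctional_residueKernel (fun m => c (α - β + m)) (fun m => d (α + m)) z n ℓ
  rw [momentFunctional_eq_sum_support, momentFunctional_prod_X_pow_mul_pointedVandermonde] at h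
  simp only [Fintype.prod_sum_type, Sum.elim_inl, Sum.elim_inr] at h
  rw [h]
  congr 2
  ext i j
  refine Fin.lastCases ?_ (Fin.addCases (fun j => ?_) fun j => ?_) j
  · simp
  · simp only [Matrix.of_apply, Fin.snoc_castSucc, columnEquiv_castAdd]
    simp [add_assoc]
  · simp only [Matrix.of_apply, Fin.snoc_castSucc, columnEquiv_natAdd]
    simp [add_assoc, add_sub_assoc]

theorem residue_formula_P3 (c d : ℤ → ℂ) (k ℓ : ℕ) (hℓk : ℓ ≤ k) (α β : ℤ) :
    Polynomial.C (((k - ℓ).factorial * ℓ.factorial : ℕ) : ℂ) * P3 c d k ℓ α β =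
      (-1 : Polynomial ℂ) ^ (ℓ * (ℓ + 1) / 2) *
        ∑ m ∈ (pKernelShift k ℓ).support,
          (pKernelShift k ℓ).coeff m *
            Polynomial.C ((∏ i : Fin (k - ℓ), c (α - β + (m (Sum.inl i) : ℤ))) *
              ∏ j : Fin ℓ, d (α + (m (Sum.inr j) : ℤ))) := by
  rw [P3, mul_left_comm, map_natCast, residue_formula_P3_general (fun i => Polynomial.C (c i))
    (fun i => Polynomial.C (d i)) Polynomial.X hℓk]
  simp only [map_mul, map_prod]
  rfl
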